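/- arXiv:1202.0932 — 4 statements merged into one kernel-verified Lean document; each statement's English description precedes it below -/
import Mathlib

section
/- For every n ≥ 1 and all permutations σ, π ∈ S_n, the minimum total number of single-element deletions and insertions needed to transform the sequence (σ(1),…,σ(n)) into the sequence (π(1),…,π(n)) equals 2·d∘(σ,π). -/
/-- `IsMove l l'` holds if `l'` is obtained from `l` by a single translocation:
removing the element at position `i` and reinserting it at position `j`. -/
def IsMove {α : Type*} (l l' : List α) : Prop :=
  ∃ i j : Fin l.length, l' = (l.eraseIdx i).insertIdx j (l.get i)

/-- `ReachIn step m l l'` holds if `l'` can be obtained from `l` by `m` applications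
of the relation `step`. -/
def ReachIn {α : Type*} (step : List α → List α → Prop) : ℕ → List α → List α → Prop
  | 0, l, l' => l = l'
  | m+1, l, l' => ∃ l'', step l l'' ∧ ReachIn step m l'' l'

/-- The one-line notation of a permutation of `Fin n`. -/
def oneLine {n : ℕ} (σ : Equiv.Perm (Fin n)) : List (Fin n) := List.ofFn σ

/-- The translocation distance: the minimum number of translocations transforming
the one-line notation of `σ` into that of `π`. -/
noncomputable def translocDist {n : ℕ} (σ π : Equiv.Perm (Fin n)) : ℕ :=
  sInf {m | ReachIn IsMove m (oneLine σ) (oneLine π)}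

/-- `IsDelIns l l'` holds if `l'` is obtained from `l` by deleting one element or
inserting one element at an arbitrary position. -/
def IsDelIns {α : Type*} (l l' : List α) : Prop :=
  (∃ i : Fin l.length, l' = l.eraseIdx i) ∨
  (∃ (i : ℕ) (a : α), i ≤ l.length ∧ l' = l.insertIdx i a)

/-- The Levenshtein deletion/insertion distance between two lists. -/
noncomputable def delInsDist {α : Type*} (u v : List α) : ℕ :=
  sInf {m | ReachIn IsDelIns m u v}

/-!
Both distances are governed by the length of a longest common subsequence. A translocation is a
deletion followed by an insertion, which gives `≤`. For `≥`, deletions and insertions from `u` to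
`v` leave a common subsequence `s` of `u` and `v` behind, and cost at least one operation for each
entry of `u` or `v` outside `s`. If `v` is a rearrangement of `u`, a single translocation puts an
entry of `u` outside `s` into its place in `v`, thereby extending `s` by one entry; so half as many
translocations suffice. Repeated entries are harmless.
-/

section

open scoped List

variable {α : Type*} {a : α} {l u v s t u₁ u₂ v₁ v₂ : List α} {m : ℕ}

theorem exists_common_sublist_of_sublist (hs : s <+ l) (hu : u <+ l) :
    ∃ r, r <+ s ∧ r <+ u ∧ s.length + u.length ≤ l.length + r.length := by
  induction l generalizing s u with
  | nil => exact ⟨[], by simp_all⟩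
  | cons b l ih =>
    rcases hs with _ | ⟨_, hs⟩ | ⟨_, hs⟩ <;> rcases hu with _ | ⟨_, hu⟩ | ⟨_, hu⟩ <;>
      obtain ⟨r, hrs, hru, hlen⟩ := ih hs hu
    · exact ⟨r, hrs, hru, by grind⟩
    · exact ⟨r, hrs, hru.cons b, by grind⟩
    · exact ⟨r, hrs.cons b, hru, by grind⟩
    · exact ⟨b :: r, hrs.cons_cons b, hru.cons_cons b, by grind⟩

theorem exists_eq_append_cons_of_sublist_of_count_lt [BEq α] [LawfulBEq α] (h : s <+ u)
    (ha : s.count a < u.count a) : ∃ u₁ u₂, u = u₁ ++ a :: u₂ ∧ s <+ u₁ ++ u₂ := by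
  induction h with
  | slnil => simp at ha
  | @cons s u b hsu ih =>
    by_cases hab : b = a
    · exact ⟨[], u, by simp [hab], hsu⟩
    · obtain ⟨u₁, u₂, rfl, hs⟩ := ih (by rwa [List.count_cons_of_ne hab] at ha)
      exact ⟨b :: u₁, u₂, rfl, hs.cons b⟩
  | cons_cons b hsu ih =>
    obtain ⟨u₁, u₂, rfl, hs⟩ := ih (by grind)
    exact ⟨b :: u₁, u₂, rfl, hs.cons_cons b⟩

theorem IsDelIns.sublist_or_sublist (h : IsDelIns u v) :
    v <+ u ∧ u.length = v.length + 1 ∨ u <+ v ∧ v.length = u.length + 1 := by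
  rcases h with ⟨i, rfl⟩ | ⟨i, a, hi, rfl⟩
  · exact .inl ⟨List.eraseIdx_sublist u i, (List.length_eraseIdx_add_one i.isLt).symm⟩
  · exact .inr ⟨List.sublist_insertIdx u i a, List.length_insertIdx_of_le_length hi a⟩

theorem ReachIn.exists_common_sublist (h : ReachIn IsDelIns m u v) :
    ∃ s, s <+ u ∧ s <+ v ∧ u.length + v.length ≤ m + 2 * s.length := by
  induction m generalizing u with
  | zero =>
    obtain rfl : u = v := h
    exact ⟨u, .refl u, .refl u, by lia⟩
  | succ m ih =>
    obtain ⟨w, huw, hwv⟩ := h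
    obtain ⟨s, hsw, hsv, hlen⟩ := ih hwv
    rcases huw.sublist_or_sublist with ⟨hwu, hlen_u⟩ | ⟨huw, hlen_w⟩
    · exact ⟨s, hsw.trans hwu, hsv, by lia⟩
    · obtain ⟨r, hrs, hru, hr⟩ := exists_common_sublist_of_sublist hsw huw
      exact ⟨r, hru, hrs.trans hsv, by lia⟩

theorem IsMove.exists_isDelIns (h : IsMove u v) : ∃ w, IsDelIns u w ∧ IsDelIns w v := by
  obtain ⟨i, j, rfl⟩ := h
  have hj : (j : ℕ) ≤ (u.eraseIdx i).length :=
    (Nat.le_sub_one_of_lt j.isLt).trans (u.le_length_eraseIdx i)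
  exact ⟨u.eraseIdx i, .inl ⟨i, rfl⟩, .inr ⟨j, u.get i, hj, rfl⟩⟩

theorem IsMove.perm (h : IsMove u v) : u ~ v := by
  obtain ⟨i, j, rfl⟩ := h
  have hj : (j : ℕ) ≤ (u.eraseIdx i).length :=
    (Nat.le_sub_one_of_lt j.isLt).trans (u.le_length_eraseIdx i)
  exact (List.getElem_cons_eraseIdx_perm i.isLt).symm.trans (List.perm_insertIdx _ _ hj).symm

theorem ReachIn.isDelIns_of_isMove (h : ReachIn IsMove m u v) :
    ReachIn IsDelIns (2 * m) u v := by
  induction m generalizing u with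
  | zero => exact h
  | succ m ih =>
    obtain ⟨w, huw, hwv⟩ := h
    obtain ⟨x, hux, hxw⟩ := huw.exists_isDelIns
    exact ⟨x, hux, w, hxw, ih hwv⟩

theorem insertIdx_length_append : (u ++ v).insertIdx u.length a = u ++ a :: v := by
  induction u <;> simp_all

theorem isMove_append_cons (h : u₁ ++ u₂ = v₁ ++ v₂) :
    IsMove (u₁ ++ a :: u₂) (v₁ ++ a :: v₂) := by
  have hlen : u₁.length + u₂.length = v₁.length + v₂.length := by
    simpa only [List.length_append] using congrArg List.length h
  have herase : (u₁ ++ a :: u₂).eraseIdx u₁.length = v₁ ++ v₂ := by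
    simp [List.eraseIdx_append_of_length_le, h]
  refine ⟨⟨u₁.length, by simp⟩, ⟨v₁.length, by grind⟩, ?_⟩
  simp [herase, insertIdx_length_append]

theorem exists_isMove_of_sublist [BEq α] [LawfulBEq α] (hu : s <+ u) (hv : s <+ v)
    (hau : s.count a < u.count a) (hav : s.count a < v.count a) :
    ∃ w r, IsMove u w ∧ r ~ a :: s ∧ r <+ w ∧ r <+ v := by
  obtain ⟨u₁, u₂, rfl, hsu⟩ := exists_eq_append_cons_of_sublist_of_count_lt hu hau
  obtain ⟨v₁, v₂, rfl, hsv⟩ := exists_eq_append_cons_of_sublist_of_count_lt hv hav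
  obtain ⟨s₁, s₂, rfl, hs₁, hs₂⟩ := List.sublist_append_iff.1 hsv
  obtain ⟨w₁, w₂, hw, hsw₁, hsw₂⟩ := List.append_sublist_iff.1 hsu
  exact ⟨w₁ ++ a :: w₂, s₁ ++ a :: s₂, isMove_append_cons hw, List.perm_middle,
    hsw₁.append (hsw₂.cons_cons a), hs₁.append (hs₂.cons_cons a)⟩

theorem reachIn_isMove_of_sublist (hsu : s <+ u) (hsv : s <+ v) (hu : u ~ s ++ t)
    (hv : v ~ s ++ t) : ReachIn IsMove t.length u v := by
  classical
  induction t generalizing u s with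
  | nil =>
    rw [List.append_nil] at hu hv
    exact (hsu.eq_of_length hu.length_eq.symm).symm.trans (hsv.eq_of_length hv.length_eq.symm)
  | cons a t ih =>
    have hcount : s.count a < (s ++ a :: t).count a := by grind
    obtain ⟨w, r, huw, hr, hrw, hrv⟩ := exists_isMove_of_sublist hsu hsv
      (hcount.trans_eq (hu.count_eq a).symm) (hcount.trans_eq (hv.count_eq a).symm)
    have hperm : s ++ a :: t ~ r ++ t := List.perm_middle.trans (hr.append_right t).symm
    exact ⟨w, huw, ih hrw hrv (huw.perm.symm.trans (hu.trans hperm)) (hv.trans hperm)⟩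

/-- The minimum number of moves of single entries that transform `u` into `v`: the translocation
distance, for lists that may have repeated entries. It is `0` if `v` is not a rearrangement of
`u`. -/
noncomputable def moveDist (u v : List α) : ℕ :=
  sInf {m | ReachIn IsMove m u v}

theorem delInsDist_eq_two_mul_translocDist_general (h : u ~ v) :
    delInsDist u v = 2 * moveDist u v := by
  have hmove : ReachIn IsMove (moveDist u v) u v :=
    Nat.sInf_mem (s := {m | ReachIn IsMove m u v})
      ⟨_, reachIn_isMove_of_sublist u.nil_sublist v.nil_sublist h (.refl v)⟩
  have hdelIns : ReachIn IsDelIns (delInsDist u v) u v :=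
    Nat.sInf_mem (s := {m | ReachIn IsDelIns m u v}) ⟨_, hmove.isDelIns_of_isMove⟩
  refine le_antisymm (Nat.sInf_le hmove.isDelIns_of_isMove) ?_
  obtain ⟨s, hsu, hsv, hlen⟩ := hdelIns.exists_common_sublist
  obtain ⟨t, hut⟩ := hsu.exists_perm_append
  have ht : moveDist u v ≤ t.length :=
    Nat.sInf_le (reachIn_isMove_of_sublist hsu hsv hut (h.symm.trans hut))
  have hlen_u : u.length = s.length + t.length := by
    rw [hut.length_eq, List.length_append]
  have hlen_v : v.length = u.length := h.length_eq.symm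
  lia

theorem oneLine_perm_oneLine {n : ℕ} (σ π : Equiv.Perm (Fin n)) : oneLine σ ~ oneLine π :=
  (σ.ofFn_comp_perm id).trans (π.ofFn_comp_perm id).symm

end

/-- For every `n ≥ 1` and all `σ, π ∈ S_n`, the minimum total number of single-element
deletions and insertions needed to transform the one-line notation of `σ` into that of
`π` equals twice the translocation distance of `σ` and `π`. -/
theorem delInsDist_eq_two_mul_translocDist (n : ℕ) (hn : 1 ≤ n)
    (σ π : Equiv.Perm (Fin n)) :
    delInsDist (oneLine σ) (oneLine π) = 2 * translocDist σ π :=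
  delInsDist_eq_two_mul_translocDist_general (oneLine_perm_oneLine σ π)
end

section
/- For every n ≥ 2 and all permutations σ, π ∈ S_n, the translocation distance satisfies dτ(σ,π)/(n−1) ≤ d∘(σ,π) ≤ dτ(σ,π), where dτ denotes the Kendall tau distance. -/
/-- `IsAdjSwap l l'` holds if `l'` is obtained from `l` by an adjacent transposition,
i.e. a translocation `φ(i,i+1)` or `φ(i+1,i)`. -/
def IsAdjSwap {α : Type*} (l l' : List α) : Prop :=
  ∃ i j : Fin l.length, ((j : ℕ) = (i : ℕ) + 1 ∨ (i : ℕ) = (j : ℕ) + 1) ∧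
    l' = (l.eraseIdx i).insertIdx j (l.get i)

/-- The Kendall tau distance: the minimum number of adjacent transpositions
transforming `σ` into `π`. -/
noncomputable def kendallDist {n : ℕ} (σ π : Equiv.Perm (Fin n)) : ℕ :=
  sInf {m | ReachIn IsAdjSwap m (oneLine σ) (oneLine π)}

/-!
An adjacent transposition is a translocation, which gives the upper bound. Conversely, moving an
entry from position `i` to position `j` can be done by `|i - j| ≤ n - 1` adjacent transpositions,
so a sequence of `m` translocations expands into at most `m * (n - 1)` adjacent transpositions.
Both distances are attained infima because adjacent transpositions connect any two lists that are
permutations of each other.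
-/

section Lists

variable {α β : Type*}

namespace ReachIn

variable {s : List α → List α → Prop} {t : List β → List β → Prop} {k m : ℕ} {l₁ l₂ l₃ : List α}

theorem single (h : s l₁ l₂) : ReachIn s 1 l₁ l₂ :=
  ⟨l₂, h, rfl⟩

theorem trans (h : ReachIn s k l₁ l₂) (h' : ReachIn s m l₂ l₃) : ReachIn s (k + m) l₁ l₃ := by
  induction k generalizing l₁ with
  | zero =>
    obtain rfl : l₁ = l₂ := h
    rwa [Nat.zero_add]
  | succ k ih =>
    obtain ⟨l, hstep, hrest⟩ := h
    rw [Nat.add_right_comm]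
    exact ⟨l, hstep, ih hrest⟩

theorem map (f : List α → List β) (hf : ∀ a b, s a b → t (f a) (f b)) (h : ReachIn s m l₁ l₂) :
    ReachIn t m (f l₁) (f l₂) := by
  induction m generalizing l₁ with
  | zero => exact congrArg f h
  | succ m ih =>
    obtain ⟨l, hstep, hrest⟩ := h
    exact ⟨f l, hf _ _ hstep, ih hrest⟩

end ReachIn

theorem IsAdjSwap.isMove {l l' : List α} (h : IsAdjSwap l l') : IsMove l l' := by
  obtain ⟨i, j, -, hl'⟩ := h
  exact ⟨i, j, hl'⟩

theorem IsAdjSwap.cons (x : α) {l l' : List α} (h : IsAdjSwap l l') :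
    IsAdjSwap (x :: l) (x :: l') := by
  obtain ⟨i, j, hij, rfl⟩ := h
  refine ⟨i.succ, j.succ, ?_, by simp⟩
  simp only [Fin.val_succ]
  omega

theorem isAdjSwap_cons_cons (x y : α) (l : List α) : IsAdjSwap (x :: y :: l) (y :: x :: l) :=
  ⟨⟨0, by simp⟩, ⟨1, by simp⟩, .inl rfl, rfl⟩

theorem isAdjSwap_insertIdx (l : List α) (x : α) {i j : ℕ} (hi : i ≤ l.length) (hj : j ≤ l.length)
    (hij : j = i + 1 ∨ i = j + 1) : IsAdjSwap (l.insertIdx i x) (l.insertIdx j x) := by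
  have hlen : (l.insertIdx i x).length = l.length + 1 := List.length_insertIdx_of_le_length hi x
  exact ⟨⟨i, by omega⟩, ⟨j, by omega⟩, hij, by simp [List.eraseIdx_insertIdx_self]⟩

theorem reachIn_isAdjSwap_insertIdx (l : List α) (x : α) {i j k : ℕ} (hi : i ≤ l.length)
    (hj : j ≤ l.length) (hij : j = i + k ∨ i = j + k) :
    ReachIn IsAdjSwap k (l.insertIdx i x) (l.insertIdx j x) := by
  induction k generalizing i with
  | zero =>
    obtain rfl : i = j := by omega
    rfl
  | succ k ih =>
    obtain ⟨i', hi', hii', hi'j⟩ :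
        ∃ i' ≤ l.length, (i' = i + 1 ∨ i = i' + 1) ∧ (j = i' + k ∨ i' = j + k) := by
      rcases hij with rfl | rfl
      · exact ⟨i + 1, by omega⟩
      · exact ⟨j + k, by omega⟩
    exact ⟨_, isAdjSwap_insertIdx l x hi hi' hii', ih hi' hi'j⟩

theorem IsMove.length_eq {l l' : List α} (h : IsMove l l') : l'.length = l.length := by
  obtain ⟨⟨i, hi⟩, ⟨j, hj⟩, rfl⟩ := h
  have hlen : (l.eraseIdx i).length = l.length - 1 := List.length_eraseIdx_of_lt hi
  dsimp only
  rw [List.length_insertIdx_of_le_length (by omega), hlen]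
  omega

theorem IsMove.exists_reachIn_isAdjSwap {l l' : List α} (h : IsMove l l') :
    ∃ k ≤ l.length - 1, ReachIn IsAdjSwap k l l' := by
  obtain ⟨⟨i, hi⟩, ⟨j, hj⟩, rfl⟩ := h
  have hlen : (l.eraseIdx i).length = l.length - 1 := List.length_eraseIdx_of_lt hi
  have hl : (l.eraseIdx i).insertIdx i l[i] = l := List.insertIdx_eraseIdx_getElem hi
  obtain ⟨k, hk, hij⟩ : ∃ k ≤ l.length - 1, j = i + k ∨ i = j + k :=
    -- In truncated subtraction, one summand is `0` and the other is `|i - j|`.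
    ⟨(j - i) + (i - j), by omega⟩
  have hreach := reachIn_isAdjSwap_insertIdx (l.eraseIdx i) l[i] (by omega) (by omega) hij
  rw [hl] at hreach
  exact ⟨k, hk, hreach⟩

theorem ReachIn.exists_reachIn_isAdjSwap {m : ℕ} {l l' : List α} (h : ReachIn IsMove m l l') :
    ∃ k ≤ m * (l.length - 1), ReachIn IsAdjSwap k l l' := by
  induction m generalizing l with
  | zero => exact ⟨0, Nat.zero_le _, h⟩
  | succ m ih =>
    obtain ⟨l₁, hmove, hrest⟩ := h
    obtain ⟨k₁, hk₁, hreach₁⟩ := hmove.exists_reachIn_isAdjSwap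
    obtain ⟨k₂, hk₂, hreach₂⟩ := ih hrest
    rw [hmove.length_eq] at hk₂
    refine ⟨k₁ + k₂, ?_, hreach₁.trans hreach₂⟩
    rw [Nat.succ_mul]
    omega

theorem exists_reachIn_isAdjSwap_of_perm {l l' : List α} (h : l.Perm l') :
    ∃ m, ReachIn IsAdjSwap m l l' := by
  induction h with
  | nil => exact ⟨0, rfl⟩
  | cons x _ ih =>
    obtain ⟨m, hm⟩ := ih
    exact ⟨m, hm.map (x :: ·) fun _ _ => .cons x⟩
  | swap x y l => exact ⟨1, .single (isAdjSwap_cons_cons y x l)⟩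
  | trans _ _ ih₁ ih₂ =>
    obtain ⟨m₁, hm₁⟩ := ih₁
    obtain ⟨m₂, hm₂⟩ := ih₂
    exact ⟨m₁ + m₂, hm₁.trans hm₂⟩

end Lists

section Distances

variable {n : ℕ} (σ π : Equiv.Perm (Fin n))

theorem length_oneLine : (oneLine σ).length = n :=
  List.length_ofFn

theorem oneLine_perm_oneLine_s2 : (oneLine σ).Perm (oneLine π) :=
  (σ.ofFn_comp_perm id).trans (π.ofFn_comp_perm id).symm

theorem reachIn_kendallDist : ReachIn IsAdjSwap (kendallDist σ π) (oneLine σ) (oneLine π) :=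
  Nat.sInf_mem (exists_reachIn_isAdjSwap_of_perm (oneLine_perm_oneLine_s2 σ π))

theorem reachIn_isMove_kendallDist : ReachIn IsMove (kendallDist σ π) (oneLine σ) (oneLine π) :=
  (reachIn_kendallDist σ π).map id fun _ _ => IsAdjSwap.isMove

theorem translocDist_le_kendallDist : translocDist σ π ≤ kendallDist σ π :=
  Nat.sInf_le (reachIn_isMove_kendallDist σ π)

theorem reachIn_translocDist : ReachIn IsMove (translocDist σ π) (oneLine σ) (oneLine π) :=
  Nat.sInf_mem (s := {m | ReachIn IsMove m (oneLine σ) (oneLine π)})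
    ⟨_, reachIn_isMove_kendallDist σ π⟩

theorem kendallDist_le_translocDist_mul : kendallDist σ π ≤ translocDist σ π * (n - 1) := by
  obtain ⟨k, hk, hreach⟩ := (reachIn_translocDist σ π).exists_reachIn_isAdjSwap
  rw [length_oneLine] at hk
  exact (Nat.sInf_le hreach).trans hk

end Distances

/-- For every `n ≥ 2` and all `σ, π ∈ S_n`,
`dτ(σ,π)/(n−1) ≤ d∘(σ,π) ≤ dτ(σ,π)`. -/
theorem kendall_bounds_translocDist (n : ℕ) (hn : 2 ≤ n) (σ π : Equiv.Perm (Fin n)) :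
    (kendallDist σ π : ℝ) / ((n : ℝ) - 1) ≤ (translocDist σ π : ℝ) ∧
    translocDist σ π ≤ kendallDist σ π := by
  refine ⟨?_, translocDist_le_kendallDist σ π⟩
  have hpos : (0 : ℝ) < (n : ℝ) - 1 := sub_pos.2 (Nat.one_lt_cast.2 hn)
  rw [div_le_iff₀ hpos, ← Nat.cast_pred (by omega : 0 < n)]
  exact_mod_cast kendallDist_le_translocDist_mul σ π
end

section
/- Let δ ∈ [0,1] and let d : ℕ → ℕ satisfy 1 ≤ d(n) ≤ n for all n ≥ 1 and d(n)/n → δ as n → ∞. Then the asymptotic rate of optimal translocation codes satisfies lim_{n→∞} ln A∘(n,d(n)) / ln(n!) = 1 − δ. -/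
/-- `maxTranslocCode n d` is the maximum size of a subset of the symmetric group on
`n` elements whose distinct elements are at pairwise translocation distance at least `d`. -/
noncomputable def maxTranslocCode (n d : ℕ) : ℕ :=
  sSup {M | ∃ C : Finset (Equiv.Perm (Fin n)), C.card = M ∧
    ∀ σ ∈ C, ∀ π ∈ C, σ ≠ π → d ≤ translocDist σ π}

/-!
Deleting the moved letter shows that a translocation does not change the rest of the word, and
conversely letters can be moved into place one at a time. Hence `d∘(σ, π) ≤ r` exactly when `σ` and
`π` become equal after deleting some set of at most `r` letters.

* Upper bound: for a fixed set of `d - 1` letters, deleting them is injective on a code of minimum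
  distance `d`, so `A∘(n, d) ≤ (n - d + 1)!`.
* Lower bound: given the centre, a permutation in a ball of radius `r` is recovered from the deleted
  letters and their positions, so the ball has at most `2 ^ n * n ^ r` elements. Gilbert–Varshamov
  then gives `n! ≤ A∘(n, d) * 2 ^ n * n ^ (d - 1)`.

Since `log n! ∼ n log n`, after taking logarithms both bounds are `(1 - d / n) * n log n` up to an
error of order `n`.
-/

section Words

variable {α : Type*}

lemma isMove_iff {l l' : List α} :
    IsMove l l' ↔ ∃ (a : α) (s t u v : List α),
      l = s ++ a :: t ∧ l' = u ++ a :: v ∧ s ++ t = u ++ v := by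
  have insertIdx_append (u v : List α) (a : α) :
      (u ++ v).insertIdx u.length a = u ++ a :: v := by
    induction u with
    | nil => rfl
    | cons x u ih => simp [ih]
  constructor
  · rintro ⟨i, j, rfl⟩
    have hj : j ≤ (l.eraseIdx i).length := by grind
    refine ⟨l.get i, l.take i, l.drop (i + 1), (l.eraseIdx i).take j, (l.eraseIdx i).drop j,
      by simp, ?_, by rw [List.take_append_drop, List.eraseIdx_eq_take_drop_succ]⟩
    simpa [hj] using
      insertIdx_append ((l.eraseIdx i).take j) ((l.eraseIdx i).drop j) (l.get i)
  · rintro ⟨a, s, t, u, v, rfl, rfl, h⟩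
    have hlength : s.length + t.length = u.length + v.length := by
      simpa using congrArg List.length h
    refine ⟨⟨s.length, by simp⟩, ⟨u.length, by simp; omega⟩, ?_⟩
    simp [List.eraseIdx_append_of_length_le, h, insertIdx_append]

lemma eq_of_forall₂_of_filter_eq {p : α → Bool} {l l' : List α}
    (h : List.Forall₂ (fun x y ↦ p x ∧ p y ∨ x = y) l l') (hp : l.filter p = l'.filter p) :
    l = l' := by
  induction h with
  | nil => rfl
  | @cons x y l l' hxy _ ih =>
    rcases hxy with ⟨hx, hy⟩ | rfl
    · rw [List.filter_cons_of_pos hx, List.filter_cons_of_pos hy, List.cons.injEq] at hp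
      rw [hp.1, ih hp.2]
    · simp only [List.filter_cons] at hp
      rw [ih (by split at hp <;> simp_all)]

variable [DecidableEq α]

/-- The word obtained from `l` by deleting all letters in `S`. Two permutations have translocation
distance at most `r` iff deleting some `r` letters makes their one-line notations equal. -/
def deleteLetters (S : Finset α) (l : List α) : List α := l.filter (· ∉ S)

lemma deleteLetters_append (S : Finset α) (l l' : List α) :
    deleteLetters S (l ++ l') = deleteLetters S l ++ deleteLetters S l' :=
  List.filter_append ..

lemma deleteLetters_union (S T : Finset α) (l : List α) :
    deleteLetters (S ∪ T) l = deleteLetters T (deleteLetters S l) := by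
  simp [deleteLetters, List.filter_filter, Bool.and_comm]

lemma deleteLetters_eq_of_subset {S T : Finset α} (hST : S ⊆ T) {l l' : List α}
    (h : deleteLetters S l = deleteLetters S l') : deleteLetters T l = deleteLetters T l' := by
  rw [← Finset.union_eq_right.2 hST, deleteLetters_union, deleteLetters_union, h]

lemma deleteLetters_singleton_append_cons (a : α) (s t : List α) :
    deleteLetters {a} (s ++ a :: t) = deleteLetters {a} (s ++ t) := by
  simp [deleteLetters]

lemma deleteLetters_insert_of_nodup (S : Finset α) {a : α} {s t : List α}
    (h : (s ++ a :: t).Nodup) :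
    deleteLetters (insert a S) (s ++ a :: t) = deleteLetters S (s ++ t) := by
  have ha : a ∉ s ++ t := (List.nodup_cons.1 (List.nodup_middle.1 h)).1
  have hdelete : deleteLetters {a} (s ++ t) = s ++ t :=
    List.filter_eq_self.2 fun x hx ↦ by simpa using ne_of_mem_of_not_mem hx ha
  rw [Finset.insert_eq, deleteLetters_union, deleteLetters_singleton_append_cons, hdelete]

lemma IsMove.exists_deleteLetters_singleton_eq {l l' : List α} (h : IsMove l l') :
    ∃ a, deleteLetters {a} l = deleteLetters {a} l' := by
  obtain ⟨a, s, t, u, v, rfl, rfl, hst⟩ := isMove_iff.1 h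
  exact ⟨a, by simp only [deleteLetters_singleton_append_cons, hst]⟩

lemma exists_deleteLetters_eq_of_reachIn {m : ℕ} {l l' : List α} (h : ReachIn IsMove m l l') :
    ∃ S : Finset α, S.card ≤ m ∧ deleteLetters S l = deleteLetters S l' := by
  induction m generalizing l with
  | zero => exact ⟨∅, le_rfl, congrArg _ h⟩
  | succ m ih =>
    obtain ⟨k, hlk, hkl'⟩ := h
    obtain ⟨a, ha⟩ := hlk.exists_deleteLetters_singleton_eq
    obtain ⟨S, hcard, hS⟩ := ih hkl'
    exact ⟨insert a S, (Finset.card_insert_le a S).trans (by omega),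
      (deleteLetters_eq_of_subset (by simp) ha).trans
        (deleteLetters_eq_of_subset (Finset.subset_insert a S) hS)⟩

lemma reachIn_of_deleteLetters_eq {S : Finset α} {l l' : List α} (hl : l.Nodup)
    (hperm : l.Perm l') (hSl : ∀ a ∈ S, a ∈ l) (h : deleteLetters S l = deleteLetters S l') :
    ReachIn IsMove S.card l l' := by
  induction S using Finset.induction_on generalizing l with
  | empty => simpa [ReachIn, deleteLetters] using h
  | insert a S ha ih =>
    obtain ⟨s, t, rfl⟩ := List.append_of_mem (hSl a (Finset.mem_insert_self a S))
    obtain ⟨u, v, rfl⟩ := List.append_of_mem (hperm.mem_iff.1 (by simp : a ∈ s ++ a :: t))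
    rw [deleteLetters_insert_of_nodup S hl,
      deleteLetters_insert_of_nodup S (hperm.nodup_iff.1 hl), deleteLetters_append S u v] at h
    -- `a` is reinserted between the parts of `s ++ t` that correspond to `u` and `v`
    obtain ⟨p, q, hpq, hp, hq⟩ := List.filter_eq_append_iff.1 h
    have hmove : (s ++ a :: t).Perm (p ++ a :: q) :=
      (List.perm_middle.trans (by rw [hpq])).trans List.perm_middle.symm
    rw [Finset.card_insert_of_notMem ha]
    refine ⟨p ++ a :: q, isMove_iff.2 ⟨a, s, t, p, q, rfl, rfl, hpq⟩,
      ih (hmove.nodup_iff.1 hl) (hmove.symm.trans hperm)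
        (fun b hb ↦ hmove.mem_iff.1 (hSl b (Finset.mem_insert_of_mem hb))) ?_⟩
    simp only [deleteLetters, List.filter_append, List.filter_cons, hp, hq]

end Words

section Distance

variable {n : ℕ} {σ π : Equiv.Perm (Fin n)}

lemma nodup_oneLine (σ : Equiv.Perm (Fin n)) : (oneLine σ).Nodup :=
  List.nodup_ofFn.2 σ.injective

lemma mem_oneLine (σ : Equiv.Perm (Fin n)) (a : Fin n) : a ∈ oneLine σ :=
  List.mem_ofFn.2 (σ.surjective a)

lemma oneLine_perm (σ π : Equiv.Perm (Fin n)) : (oneLine σ).Perm (oneLine π) :=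
  (List.perm_ext_iff_of_nodup (nodup_oneLine σ) (nodup_oneLine π)).2
    (by simp only [mem_oneLine, implies_true])

lemma oneLine_injective : Function.Injective (oneLine (n := n)) :=
  List.ofFn_injective.comp Equiv.coe_fn_injective

lemma reachIn_oneLine_of_deleteLetters_eq {S : Finset (Fin n)}
    (h : deleteLetters S (oneLine σ) = deleteLetters S (oneLine π)) :
    ReachIn IsMove S.card (oneLine σ) (oneLine π) :=
  reachIn_of_deleteLetters_eq (nodup_oneLine σ) (oneLine_perm σ π) (fun a _ ↦ mem_oneLine σ a) h

lemma translocDist_le_iff {r : ℕ} :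
    translocDist σ π ≤ r ↔ ∃ S : Finset (Fin n), S.card ≤ r ∧
      deleteLetters S (oneLine σ) = deleteLetters S (oneLine π) := by
  constructor
  · intro hr
    have hreach : {m | ReachIn IsMove m (oneLine σ) (oneLine π)}.Nonempty :=
      ⟨_, reachIn_oneLine_of_deleteLetters_eq (S := Finset.univ) (by simp [deleteLetters])⟩
    obtain ⟨S, hcard, hS⟩ := exists_deleteLetters_eq_of_reachIn (Nat.sInf_mem hreach)
    exact ⟨S, hcard.trans hr, hS⟩
  · rintro ⟨S, hcard, hS⟩
    exact (Nat.sInf_le (reachIn_oneLine_of_deleteLetters_eq hS)).trans hcard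

lemma translocDist_self (σ : Equiv.Perm (Fin n)) : translocDist σ σ = 0 :=
  Nat.le_zero.1 (translocDist_le_iff.2 ⟨∅, le_rfl, rfl⟩)

lemma translocDist_comm (σ π : Equiv.Perm (Fin n)) : translocDist σ π = translocDist π σ :=
  eq_of_forall_ge_iff fun r ↦ by simp only [translocDist_le_iff, eq_comm]

lemma eq_of_deleteLetters_eq_of_symm_eq {S : Finset (Fin n)}
    (h : deleteLetters S (oneLine σ) = deleteLetters S (oneLine π))
    (hS : ∀ a ∈ S, σ.symm a = π.symm a) : σ = π := by
  refine oneLine_injective (eq_of_forall₂_of_filter_eq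
    (List.forall₂_iff_get.2 ⟨by simp [oneLine], fun i hi _ ↦ ?_⟩) h)
  let k : Fin n := ⟨i, by simpa [oneLine] using hi⟩
  suffices σ k ∉ S ∧ π k ∉ S ∨ σ k = π k by simpa [oneLine] using this
  by_cases hσ : σ k ∈ S
  · exact .inr (π.symm_apply_eq.1 ((hS _ hσ).symm.trans (σ.symm_apply_apply k)))
  by_cases hπ : π k ∈ S
  · exact .inr (σ.symm_apply_eq.1 ((hS _ hπ).trans (π.symm_apply_apply k))).symm
  · exact .inl ⟨hσ, hπ⟩

/-- The closed ball of radius `r` around `σ` in the translocation distance. -/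
noncomputable def translocBall (σ : Equiv.Perm (Fin n)) (r : ℕ) : Finset (Equiv.Perm (Fin n)) :=
  {π | translocDist σ π ≤ r}

lemma card_deleteLetters_eq_le (S : Finset (Fin n)) (σ : Equiv.Perm (Fin n)) :
    Finset.card {π | deleteLetters S (oneLine σ) = deleteLetters S (oneLine π)}
      ≤ n ^ S.card := by
  calc
    _ ≤ (Finset.univ : Finset (S → Fin n)).card := by
      refine Finset.card_le_card_of_injOn (fun π a ↦ π.symm a) (by simp) fun π hπ ρ hρ h ↦ ?_
      rw [Finset.mem_coe, Finset.mem_filter_univ] at hπ hρ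
      exact eq_of_deleteLetters_eq_of_symm_eq (hπ.symm.trans hρ) fun a ha ↦ congrFun h ⟨a, ha⟩
    _ = n ^ S.card := by simp

lemma card_translocBall_le (hn : n ≠ 0) (σ : Equiv.Perm (Fin n)) (r : ℕ) :
    (translocBall σ r).card ≤ 2 ^ n * n ^ r := by
  have hcover : translocBall σ r ⊆ ({S | S.card ≤ r} : Finset (Finset (Fin n))).biUnion
      fun S ↦ {π | deleteLetters S (oneLine σ) = deleteLetters S (oneLine π)} := fun π hπ ↦ by
    simpa [translocBall, translocDist_le_iff] using hπ
  calc
    (translocBall σ r).card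
      ≤ ({S | S.card ≤ r} : Finset (Finset (Fin n))).card * n ^ r := by
        refine (Finset.card_le_card hcover).trans
          (Finset.card_biUnion_le_card_mul _ _ _ fun S hS ↦ ?_)
        exact (card_deleteLetters_eq_le S σ).trans
          (Nat.pow_le_pow_right (Nat.pos_of_ne_zero hn) (Finset.mem_filter_univ S |>.1 hS))
    _ ≤ 2 ^ n * n ^ r := by
        gcongr
        simpa using Finset.card_filter_le (Finset.univ : Finset (Finset (Fin n))) (·.card ≤ r)

end Distance

section Codes

variable {n d : ℕ} {C : Finset (Equiv.Perm (Fin n))}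

/-- `C` is a translocation code of minimum distance at least `d`. This is the condition on `C` in
the definition of `maxTranslocCode`. -/
def IsTranslocCode (d : ℕ) (C : Finset (Equiv.Perm (Fin n))) : Prop :=
  ∀ σ ∈ C, ∀ π ∈ C, σ ≠ π → d ≤ translocDist σ π

lemma bddAbove_card_isTranslocCode (n d : ℕ) :
    BddAbove {M | ∃ C : Finset (Equiv.Perm (Fin n)), C.card = M ∧ IsTranslocCode d C} :=
  ⟨Fintype.card (Equiv.Perm (Fin n)), by rintro _ ⟨C, rfl, -⟩; exact C.card_le_univ⟩

lemma IsTranslocCode.card_le_maxTranslocCode (hC : IsTranslocCode d C) :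
    C.card ≤ maxTranslocCode n d :=
  le_csSup (bddAbove_card_isTranslocCode n d) ⟨C, rfl, hC⟩

lemma exists_isTranslocCode_card_eq (n d : ℕ) :
    ∃ C : Finset (Equiv.Perm (Fin n)), C.card = maxTranslocCode n d ∧ IsTranslocCode d C :=
  Nat.sSup_mem (s := {M | ∃ C : Finset (Equiv.Perm (Fin n)), C.card = M ∧ IsTranslocCode d C})
    ⟨0, ∅, by simp [IsTranslocCode]⟩ (bddAbove_card_isTranslocCode n d)

lemma maxTranslocCode_pos (n d : ℕ) : 0 < maxTranslocCode n d := by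
  have hsingleton : IsTranslocCode d {(1 : Equiv.Perm (Fin n))} := by simp [IsTranslocCode]
  exact hsingleton.card_le_maxTranslocCode

lemma IsTranslocCode.insert {π : Equiv.Perm (Fin n)} (hC : IsTranslocCode d C)
    (hπ : ∀ σ ∈ C, d ≤ translocDist σ π) : IsTranslocCode d (insert π C) := by
  intro σ hσ ρ hρ hne
  rw [Finset.mem_insert] at hσ hρ
  rcases hσ with rfl | hσ <;> rcases hρ with rfl | hρ
  · exact absurd rfl hne
  · exact translocDist_comm ρ σ ▸ hπ ρ hρ
  · exact hπ σ hσ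
  · exact hC σ hσ ρ hρ hne

lemma IsTranslocCode.injOn_deleteLetters {S : Finset (Fin n)} (hC : IsTranslocCode d C)
    (hS : S.card < d) : Set.InjOn (fun σ ↦ deleteLetters S (oneLine σ)) C := by
  intro σ hσ π hπ h
  by_contra hne
  exact ((hC σ hσ π hπ hne).trans (translocDist_le_iff.2 ⟨S, le_rfl, h⟩)).not_gt hS

lemma length_deleteLetters_oneLine (S : Finset (Fin n)) (σ : Equiv.Perm (Fin n)) :
    (deleteLetters S (oneLine σ)).length = n - S.card := by
  have htoFinset : (deleteLetters S (oneLine σ)).toFinset = Sᶜ := by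
    ext a
    simp [deleteLetters, mem_oneLine]
  have hnodup : (deleteLetters S (oneLine σ)).Nodup := (nodup_oneLine σ).filter _
  rw [← List.toFinset_card_of_nodup hnodup, htoFinset, Finset.card_compl, Fintype.card_fin]

lemma IsTranslocCode.card_le_factorial {S : Finset (Fin n)} (hC : IsTranslocCode d C)
    (hS : S.card < d) : C.card ≤ (n - S.card).factorial := by
  let w := deleteLetters S (oneLine (1 : Equiv.Perm (Fin n)))
  calc
    C.card ≤ w.permutations.toFinset.card :=
      Finset.card_le_card_of_injOn _
        (fun σ _ ↦ List.mem_toFinset.2 (List.mem_permutations.2 ((oneLine_perm σ 1).filter _)))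
        (hC.injOn_deleteLetters hS)
    _ ≤ w.length.factorial := by
      simpa only [List.length_permutations] using List.toFinset_card_le w.permutations
    _ = (n - S.card).factorial := by rw [length_deleteLetters_oneLine]

lemma maxTranslocCode_succ_le_factorial (n d : ℕ) :
    maxTranslocCode n (d + 1) ≤ (n - d).factorial := by
  obtain ⟨C, hcard, hC⟩ := exists_isTranslocCode_card_eq n (d + 1)
  obtain ⟨S, -, hS⟩ := Finset.exists_subset_card_eq
    (s := (Finset.univ : Finset (Fin n))) (n := min d n) (by simp)
  have hle := hC.card_le_factorial (S := S) (by omega)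
  rwa [hcard, hS, show n - min d n = n - d by omega] at hle

lemma exists_translocDist_le_of_card_eq (hC : IsTranslocCode (d + 1) C)
    (hcard : C.card = maxTranslocCode n (d + 1)) (π : Equiv.Perm (Fin n)) :
    ∃ σ ∈ C, translocDist σ π ≤ d := by
  by_contra! hfar
  have hπ : π ∉ C := fun hmem ↦ by simpa [translocDist_self] using hfar π hmem
  have hle := (hC.insert hfar).card_le_maxTranslocCode
  rw [Finset.card_insert_of_notMem hπ] at hle
  omega

lemma factorial_le_maxTranslocCode_succ_mul (hn : n ≠ 0) (d : ℕ) :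
    n.factorial ≤ maxTranslocCode n (d + 1) * (2 ^ n * n ^ d) := by
  obtain ⟨C, hcard, hC⟩ := exists_isTranslocCode_card_eq n (d + 1)
  have hcover : Finset.univ ⊆ C.biUnion (translocBall · d) := fun π _ ↦ by
    simpa [translocBall] using exists_translocDist_le_of_card_eq hC hcard π
  calc
    n.factorial = (Finset.univ : Finset (Equiv.Perm (Fin n))).card := by
      rw [Finset.card_univ, Fintype.card_perm, Fintype.card_fin]
    _ ≤ (C.biUnion (translocBall · d)).card := Finset.card_le_card hcover
    _ ≤ C.card * (2 ^ n * n ^ d) :=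
      Finset.card_biUnion_le_card_mul _ _ _ fun σ _ ↦ card_translocBall_le hn σ d
    _ = maxTranslocCode n (d + 1) * (2 ^ n * n ^ d) := by rw [hcard]

end Codes

section Asymptotics

open Filter Topology Asymptotics

lemma log_factorial_le (n : ℕ) : Real.log n.factorial ≤ n * Real.log n := by
  rw [← Real.log_pow]
  exact Real.log_le_log (mod_cast n.factorial_pos) (mod_cast n.factorial_le_pow)

lemma le_log_factorial (n : ℕ) : n * Real.log n - n ≤ Real.log n.factorial := by
  rcases eq_or_ne n 0 with rfl | hn
  · simp
  have hpi : 0 ≤ Real.log (2 * Real.pi) := Real.log_nonneg (by linarith [Real.pi_gt_three])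
  linarith [Stirling.le_log_factorial_stirling hn, Real.log_natCast_nonneg n]

lemma tendsto_log_natCast_atTop : Tendsto (fun n : ℕ ↦ Real.log n) atTop atTop :=
  Real.tendsto_log_atTop.comp tendsto_natCast_atTop_atTop

lemma isEquivalent_log_factorial :
    (fun n : ℕ ↦ Real.log n.factorial) ~[atTop] fun n ↦ n * Real.log n := by
  refine isEquivalent_of_tendsto_one ?_
  have hlower : Tendsto (fun n : ℕ ↦ 1 - (Real.log n)⁻¹) atTop (𝓝 1) := by
    simpa using tendsto_log_natCast_atTop.inv_tendsto_atTop.const_sub 1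
  refine tendsto_of_tendsto_of_tendsto_of_le_of_le' hlower tendsto_const_nhds ?_ ?_
  · filter_upwards [eventually_ge_atTop 2] with n hn
    have hlog : 0 < Real.log n := Real.log_pos (mod_cast hn)
    rw [Pi.div_apply, le_div_iff₀ (by positivity)]
    calc
      (1 - (Real.log n)⁻¹) * (n * Real.log n) = n * Real.log n - n := by field_simp
      _ ≤ Real.log n.factorial := le_log_factorial n
  · exact .of_forall fun n ↦ div_le_one_of_le₀ (log_factorial_le n) (by positivity)

lemma log_maxTranslocCode_succ_le (n d : ℕ) :
    Real.log (maxTranslocCode n (d + 1)) ≤ (n - d : ℕ) * Real.log n := by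
  have hbound : maxTranslocCode n (d + 1) ≤ n ^ (n - d) :=
    calc
      maxTranslocCode n (d + 1) ≤ (n - d).factorial := maxTranslocCode_succ_le_factorial n d
      _ ≤ (n - d) ^ (n - d) := Nat.factorial_le_pow _
      _ ≤ n ^ (n - d) := Nat.pow_le_pow_left (Nat.sub_le n d) _
  rw [← Real.log_pow]
  exact Real.log_le_log (mod_cast maxTranslocCode_pos n _) (mod_cast hbound)

lemma le_log_maxTranslocCode_succ {n : ℕ} (hn : n ≠ 0) (d : ℕ) :
    n * Real.log n - n - n * Real.log 2 - d * Real.log n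
      ≤ Real.log (maxTranslocCode n (d + 1)) := by
  have hpos : (maxTranslocCode n (d + 1) : ℝ) ≠ 0 := mod_cast (maxTranslocCode_pos n _).ne'
  have hlog : Real.log n.factorial
      ≤ Real.log (maxTranslocCode n (d + 1) * (2 ^ n * n ^ d) : ℝ) :=
    Real.log_le_log (mod_cast n.factorial_pos) (mod_cast factorial_le_maxTranslocCode_succ_mul hn d)
  rw [Real.log_mul hpos (by positivity), Real.log_mul (by positivity) (by positivity),
    Real.log_pow, Real.log_pow] at hlog
  linarith [le_log_factorial n]

lemma log_maxTranslocCode_div_le {n d : ℕ} (hn : 2 ≤ n) (hd : 1 ≤ d) (hdn : d ≤ n) :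
    Real.log (maxTranslocCode n d) / (n * Real.log n) ≤ 1 - d / n + (n : ℝ)⁻¹ := by
  obtain ⟨d, rfl⟩ := Nat.exists_eq_add_of_le' hd
  have hlog : 0 < Real.log n := Real.log_pos (mod_cast hn)
  rw [div_le_iff₀ (by positivity)]
  calc
    Real.log (maxTranslocCode n (d + 1)) ≤ (n - d : ℕ) * Real.log n :=
      log_maxTranslocCode_succ_le n d
    _ = (1 - ↑(d + 1) / n + (n : ℝ)⁻¹) * (n * Real.log n) := by
      push_cast [Nat.cast_sub (Nat.le_of_succ_le hdn)]
      field_simp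
      ring

lemma le_log_maxTranslocCode_div {n d : ℕ} (hn : 2 ≤ n) (hd : 1 ≤ d) :
    1 - (d / n : ℝ) - (1 + Real.log 2) * (Real.log n)⁻¹
      ≤ Real.log (maxTranslocCode n d) / (n * Real.log n) := by
  obtain ⟨d, rfl⟩ := Nat.exists_eq_add_of_le' hd
  have hlog : 0 < Real.log n := Real.log_pos (mod_cast hn)
  rw [le_div_iff₀ (by positivity)]
  calc
    (1 - ↑(d + 1) / n - (1 + Real.log 2) * (Real.log n)⁻¹) * (n * Real.log n)
      = n * Real.log n - n - n * Real.log 2 - d * Real.log n - Real.log n := by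
        push_cast
        field_simp
        ring
    _ ≤ Real.log (maxTranslocCode n (d + 1)) := by
        linarith [le_log_maxTranslocCode_succ (by omega : n ≠ 0) d]

end Asymptotics

open Filter in
/-- Capacity of the translocation channel: if `d(n)/n → δ ∈ [0,1]` with
`1 ≤ d(n) ≤ n`, then `ln A∘(n,d(n)) / ln(n!) → 1 − δ`. -/
theorem translocCode_capacity (δ : ℝ) (hδ : δ ∈ Set.Icc (0 : ℝ) 1) (d : ℕ → ℕ)
    (hd : ∀ n, 1 ≤ n → 1 ≤ d n ∧ d n ≤ n)
    (hlim : Tendsto (fun n => (d n : ℝ) / (n : ℝ)) atTop (nhds δ)) :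
    Tendsto (fun n => Real.log (maxTranslocCode n (d n)) / Real.log (n.factorial))
      atTop (nhds (1 - δ)) := by
  suffices h : Tendsto (fun n ↦ Real.log (maxTranslocCode n (d n)) / (n * Real.log n))
      atTop (nhds (1 - δ)) from
    (Asymptotics.IsEquivalent.refl.div isEquivalent_log_factorial.symm).tendsto_nhds h
  have hupper : Tendsto (fun n : ℕ ↦ 1 - (d n : ℝ) / n + (n : ℝ)⁻¹) atTop (nhds (1 - δ)) := by
    simpa using (hlim.const_sub 1).add tendsto_inv_atTop_nhds_zero_nat
  have hlower : Tendsto (fun n : ℕ ↦ 1 - (d n : ℝ) / n - (1 + Real.log 2) * (Real.log n)⁻¹)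
      atTop (nhds (1 - δ)) := by
    simpa using (hlim.const_sub 1).sub
      (tendsto_log_natCast_atTop.inv_tendsto_atTop.const_mul (1 + Real.log 2))
  refine tendsto_of_tendsto_of_tendsto_of_le_of_le' hlower hupper ?_ ?_
  all_goals
    filter_upwards [eventually_ge_atTop 2] with n hn
    obtain ⟨hd_pos, hd_le⟩ := hd n (by omega)
  · exact le_log_maxTranslocCode_div hn hd_pos
  · exact log_maxTranslocCode_div_le hn hd_pos hd_le
end

section
/- For all integers n and d with n ≥ d ≥ 1, the maximum size A_T(n,d) of a subset of S_n whose distinct elements are at pairwise transposition (Cayley) distance at least d satisfies n! / |{π ∈ S_n : c(π) ≥ n−d+1}| ≤ A_T(n,d) ≤ n!/d!, where c(π) denotes the number of cycles of π (so that |{π ∈ S_n : c(π) ≥ n−d+1}| = Σ_{i=n−d+1}^{n} (−1)^{n−i} s(n,i) with s(n,i) the Stirling numbers of the first kind). -/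
/-- The transposition (Cayley) distance: the minimum number of transpositions
transforming `σ` into `π`. -/
noncomputable def cayleyDist {n : ℕ} (σ π : Equiv.Perm (Fin n)) : ℕ :=
  sInf {m | ∃ L : List (Equiv.Perm (Fin n)), L.length = m ∧
    (∀ τ ∈ L, ∃ a b : Fin n, a ≠ b ∧ τ = Equiv.swap a b) ∧ π = σ * L.prod}

/-- The number of cycles of a permutation, counting fixed points as cycles. -/
def numCycles {n : ℕ} (π : Equiv.Perm (Fin n)) : ℕ :=
  Multiset.card π.cycleType + (Finset.univ.filter fun x => π x = x).card

/-- `maxCayleyCode n d` is the maximum size of a subset of the symmetric group on `n`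
elements whose distinct elements are at pairwise Cayley distance at least `d`. -/
noncomputable def maxCayleyCode (n d : ℕ) : ℕ :=
  sSup {M | ∃ C : Finset (Equiv.Perm (Fin n)), C.card = M ∧
    ∀ σ ∈ C, ∀ π ∈ C, σ ≠ π → d ≤ cayleyDist σ π}

/-!
A function on the points is invariant under a permutation exactly when it is constant on the cycles,
so the space of invariant functions has dimension at most the number of cycles. A transposition
imposes one linear equation `f a = f b`; hence a product of `m` transpositions has at least `n - m`
cycles. As a cycle of length `k` is a product of `k - 1` transpositions, the distance from `σ` to
`π` is exactly `n - c(σ⁻¹π)`.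

Lower bound (Gilbert–Varshamov): the balls of radius `d - 1` around a code of maximum size cover
`S_n`. Upper bound: two permutations in the same left coset of `S_d` are at distance less than `d`,
because a permutation of `d` points has at least one cycle; so the codewords lie in distinct cosets.
-/

open Equiv Equiv.Perm Finset Module

section InvariantFunctions

variable {α : Type*} (K : Type*) [Field K]

/-- The functions `α → K` that are constant on the cycles of `σ`, as the fixed space of the
permutation representation; its dimension serves as a cycle count that is compatible with
products. -/
def invariantFunctions (σ : Perm α) : Submodule K (α → K) :=
  LinearMap.eqLocus (LinearMap.funLeft K K σ) LinearMap.id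

variable {K}

theorem mem_invariantFunctions {σ : Perm α} {f : α → K} :
    f ∈ invariantFunctions K σ ↔ ∀ x, f (σ x) = f x :=
  funext_iff

theorem invariantFunctions_one : invariantFunctions K (1 : Perm α) = ⊤ :=
  eq_top_iff.mpr fun _ _ => mem_invariantFunctions.mpr fun _ => rfl

theorem invariantFunctions_inf_le_mul (σ τ : Perm α) :
    invariantFunctions K σ ⊓ invariantFunctions K τ ≤ invariantFunctions K (σ * τ) := by
  rintro f ⟨hσ, hτ⟩
  exact mem_invariantFunctions.mpr fun x =>
    (mem_invariantFunctions.mp hσ (τ x)).trans (mem_invariantFunctions.mp hτ x)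

theorem apply_eq_of_sameCycle {σ : Perm α} {f : α → K} (hf : f ∈ invariantFunctions K σ) {x y : α}
    (hxy : σ.SameCycle x y) : f x = f y := by
  rw [mem_invariantFunctions] at hf
  obtain ⟨k, rfl⟩ := hxy
  induction k with
  | zero => rfl
  | succ k ih => rw [add_comm, zpow_one_add, mul_apply, hf, ← ih]
  | pred k ih =>
    rw [← hf ((σ ^ (-(k : ℤ) - 1)) x), ← mul_apply, ← zpow_one_add, add_sub_cancel, ← ih]

variable [Fintype α]

theorem finrank_invariantFunctions_add_le_mul (σ τ : Perm α) :
    finrank K (invariantFunctions K σ) + finrank K (invariantFunctions K τ) ≤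
      Fintype.card α + finrank K (invariantFunctions K (σ * τ)) := by
  rw [← Submodule.finrank_sup_add_finrank_inf_eq, ← finrank_fintype_fun_eq_card K]
  exact add_le_add (Submodule.finrank_le _)
    (Submodule.finrank_mono (invariantFunctions_inf_le_mul σ τ))

variable [DecidableEq α]

theorem card_le_finrank_invariantFunctions_add_one {τ : Perm α} (hτ : τ.IsSwap) :
    Fintype.card α ≤ finrank K (invariantFunctions K τ) + 1 := by
  obtain ⟨a, b, -, rfl⟩ := hτ
  let coord (x : α) : (α → K) →ₗ[K] K := LinearMap.proj x
  let φ : (α → K) →ₗ[K] K := coord a - coord b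
  have hker : LinearMap.ker φ ≤ invariantFunctions K (swap a b) := by
    intro f hf
    have hab : f a = f b := sub_eq_zero.mp hf
    refine mem_invariantFunctions.mpr fun x => ?_
    rw [swap_apply_def]
    split_ifs with hxa hxb
    · rw [hxa, hab]
    · rw [hxb, hab]
    · rfl
  have hrange : finrank K (LinearMap.range φ) ≤ 1 :=
    (Submodule.finrank_le _).trans_eq (finrank_self K)
  calc Fintype.card α
      = finrank K (LinearMap.range φ) + finrank K (LinearMap.ker φ) := by
        rw [LinearMap.finrank_range_add_finrank_ker, finrank_fintype_fun_eq_card]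
    _ ≤ finrank K (invariantFunctions K (swap a b)) + 1 := by
        rw [add_comm]
        exact add_le_add (Submodule.finrank_mono hker) hrange

variable (K) in
theorem card_le_length_add_finrank_invariantFunctions_prod {L : List (Perm α)}
    (hL : ∀ τ ∈ L, τ.IsSwap) :
    Fintype.card α ≤ L.length + finrank K (invariantFunctions K L.prod) := by
  induction L with
  | nil =>
    rw [List.prod_nil, invariantFunctions_one, finrank_top, finrank_fintype_fun_eq_card]
    exact Nat.le_add_left _ _
  | cons τ L ih =>
    have hτ := card_le_finrank_invariantFunctions_add_one (K := K) (hL τ List.mem_cons_self)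
    have hprod := ih fun ρ hρ => hL ρ (List.mem_cons_of_mem τ hρ)
    have hmul := finrank_invariantFunctions_add_le_mul (K := K) τ L.prod
    rw [List.prod_cons, List.length_cons]
    omega

variable (K) in
theorem finrank_invariantFunctions_le (σ : Perm α) :
    finrank K (invariantFunctions K σ) ≤ σ.cycleType.card + #{x | σ x = x} := by
  have hrep (c : σ.cycleFactorsFinset) : ∃ x, x ∈ (c : Perm α).support :=
    (mem_cycleFactorsFinset_iff.mp c.2).1.nonempty_support
  choose r hr using hrep
  let representative : σ.cycleFactorsFinset ⊕ {x // σ x = x} → α := Sum.elim r Subtype.val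
  have hmeets (x : α) : ∃ i, σ.SameCycle x (representative i) := by
    by_cases hx : σ x = x
    · exact ⟨.inr ⟨x, hx⟩, .refl σ x⟩
    · have hc := cycleOf_mem_cycleFactorsFinset_iff.mpr (mem_support.mpr hx)
      exact ⟨.inl ⟨_, hc⟩, (mem_support_cycleOf_iff.mp (hr ⟨_, hc⟩)).1⟩
  have hinj : Function.Injective
      ((LinearMap.funLeft K K representative).domRestrict (invariantFunctions K σ)) := by
    intro f g hfg
    ext x
    obtain ⟨i, hi⟩ := hmeets x
    rw [apply_eq_of_sameCycle f.2 hi, apply_eq_of_sameCycle g.2 hi]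
    exact congrFun hfg i
  have hle := LinearMap.finrank_le_finrank_of_injective hinj
  rw [finrank_fintype_fun_eq_card, Fintype.card_sum, Fintype.card_coe, Fintype.card_subtype] at hle
  rwa [cycleType_def, Multiset.card_map, card_val]

end InvariantFunctions

section SwapFactorization

variable {α : Type*} [DecidableEq α]

theorem isSwap_of_mem_zipWith_swap_tail :
    ∀ {l : List α}, l.Nodup → ∀ τ ∈ List.zipWith swap l l.tail, τ.IsSwap
  | [], _, _, hτ => by simp at hτ
  | [_], _, _, hτ => by simp at hτ
  | x :: y :: l, hl, τ, hτ => by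
    rcases List.mem_cons.mp hτ with rfl | hτ
    · exact ⟨x, y, fun hxy => hl.notMem (hxy ▸ List.mem_cons_self), rfl⟩
    · exact isSwap_of_mem_zipWith_swap_tail hl.of_cons τ hτ

variable [Fintype α]

theorem exists_isSwap_list_prod_eq_of_isCycle {σ : Perm α} (hσ : σ.IsCycle) :
    ∃ L : List (Perm α), (∀ τ ∈ L, τ.IsSwap) ∧ L.prod = σ ∧ L.length + 1 = #σ.support := by
  obtain ⟨x, hx⟩ := hσ.nonempty_support
  have hcycle : σ.cycleOf x = σ := hσ.cycleOf_eq (mem_support.mp hx)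
  refine ⟨List.zipWith swap (σ.toList x) (σ.toList x).tail,
    isSwap_of_mem_zipWith_swap_tail (nodup_toList σ x), (formPerm_toList σ x).trans hcycle, ?_⟩
  have htwo := hσ.two_le_card_support
  rw [List.length_zipWith, List.length_tail, Perm.length_toList, hcycle]
  omega

theorem exists_isSwap_list_prod_eq (σ : Perm α) :
    ∃ L : List (Perm α),
      (∀ τ ∈ L, τ.IsSwap) ∧ L.prod = σ ∧ L.length + σ.cycleType.card = #σ.support := by
  induction σ using cycle_induction_on with
  | base_one => exact ⟨[], by simp⟩
  | base_cycles σ hσ =>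
    simpa only [hσ.cycleType, Multiset.card_singleton] using
      exists_isSwap_list_prod_eq_of_isCycle hσ
  | induction_disjoint σ τ hdisj _ hσ hτ =>
    obtain ⟨L, hL, rfl, hLlen⟩ := hσ
    obtain ⟨M, hM, rfl, hMlen⟩ := hτ
    refine ⟨L ++ M, fun ρ hρ => (List.mem_append.mp hρ).elim (hL ρ) (hM ρ), List.prod_append, ?_⟩
    rw [List.length_append, hdisj.cycleType_mul, Multiset.card_add, hdisj.card_support_mul]
    omega

end SwapFactorization

section NumCycles

variable {n : ℕ}

theorem numCycles_add_card_support (π : Perm (Fin n)) :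
    numCycles π + #π.support = π.cycleType.card + n := by
  have hpartition : #{x | π x = x} + #π.support = n :=
    (card_filter_add_card_filter_not _).trans (Fintype.card_fin n)
  rw [numCycles, add_assoc, hpartition]

theorem numCycles_one : numCycles (1 : Perm (Fin n)) = n := by
  simpa using numCycles_add_card_support (1 : Perm (Fin n))

theorem numCycles_inv (π : Perm (Fin n)) : numCycles π⁻¹ = numCycles π := by
  have hπ := numCycles_add_card_support π
  have hinv := numCycles_add_card_support π⁻¹
  rw [support_inv, cycleType_inv] at hinv
  omega

theorem numCycles_pos (hn : 0 < n) (π : Perm (Fin n)) : 0 < numCycles π := by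
  rcases eq_or_ne π 1 with rfl | hπ
  · rwa [numCycles_one]
  · exact Nat.add_pos_left (card_cycleType_pos.mpr hπ) _

theorem numCycles_viaEmbedding_add {d : ℕ} (ι : Fin d ↪ Fin n) (π : Perm (Fin d)) :
    numCycles (π.viaEmbedding ι) + d = numCycles π + n := by
  have hπ := numCycles_add_card_support π
  have hemb := numCycles_add_card_support (π.viaEmbedding ι)
  -- `viaEmbedding` is built on the classical instance, which must take precedence here.
  let : DecidablePred (· ∈ Set.range ι.toFun) := fun _ => Classical.propDecidable _
  rw [viaEmbedding, card_support_extend_domain, cycleType_extendDomain] at hemb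
  rw [viaEmbedding]
  omega

theorem le_length_add_numCycles_prod {L : List (Perm (Fin n))} (hL : ∀ τ ∈ L, τ.IsSwap) :
    n ≤ L.length + numCycles L.prod :=
  calc n = Fintype.card (Fin n) := (Fintype.card_fin n).symm
    _ ≤ L.length + finrank ℚ (invariantFunctions ℚ L.prod) :=
        card_le_length_add_finrank_invariantFunctions_prod ℚ hL
    _ ≤ L.length + numCycles L.prod :=
        Nat.add_le_add_left (finrank_invariantFunctions_le ℚ L.prod) _

end NumCycles

section CayleyDist

variable {n : ℕ}

theorem cayleyDist_add_numCycles (σ π : Perm (Fin n)) :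
    cayleyDist σ π + numCycles (σ⁻¹ * π) = n := by
  obtain ⟨L, hL, hprod, hlen⟩ := exists_isSwap_list_prod_eq (σ⁻¹ * π)
  have hmem : L.length ∈ {m | ∃ L : List (Perm (Fin n)), L.length = m ∧
      (∀ τ ∈ L, τ.IsSwap) ∧ π = σ * L.prod} :=
    ⟨L, rfl, hL, by rw [hprod, mul_inv_cancel_left]⟩
  have hle : cayleyDist σ π ≤ L.length := Nat.sInf_le hmem
  obtain ⟨M, hMlen, hM, hMprod⟩ := Nat.sInf_mem ⟨_, hmem⟩
  change M.length = cayleyDist σ π at hMlen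
  have hge := le_length_add_numCycles_prod hM
  rw [← inv_mul_eq_of_eq_mul hMprod] at hge
  have hcount := numCycles_add_card_support (σ⁻¹ * π)
  omega

theorem cayleyDist_self (σ : Perm (Fin n)) : cayleyDist σ σ = 0 := by
  simpa [numCycles_one] using cayleyDist_add_numCycles σ σ

theorem cayleyDist_comm (σ π : Perm (Fin n)) : cayleyDist σ π = cayleyDist π σ := by
  have hσπ := cayleyDist_add_numCycles σ π
  have hπσ := cayleyDist_add_numCycles π σ
  rw [← numCycles_inv, mul_inv_rev, inv_inv] at hπσ
  omega

theorem cayleyDist_lt_iff {d : ℕ} (hdn : d ≤ n) {σ π : Perm (Fin n)} :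
    cayleyDist σ π < d ↔ n - d + 1 ≤ numCycles (σ⁻¹ * π) := by
  have h := cayleyDist_add_numCycles σ π
  omega

theorem cayleyDist_mul_viaEmbedding_lt {d : ℕ} (hd : 0 < d) (ι : Fin d ↪ Fin n)
    (σ : Perm (Fin n)) (π : Perm (Fin d)) : cayleyDist σ (σ * π.viaEmbedding ι) < d := by
  have hdist := cayleyDist_add_numCycles σ (σ * π.viaEmbedding ι)
  have hemb := numCycles_viaEmbedding_add ι π
  have hpos := numCycles_pos hd π
  rw [inv_mul_cancel_left] at hdist
  omega

end CayleyDist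

section FiniteGroup

variable {G : Type*} [Group G]

open Pointwise in
theorem card_le_ncard_mul_ncard_of_forall_exists_inv_mul_mem {C B : Set G}
    (hcover : ∀ g, ∃ c ∈ C, c⁻¹ * g ∈ B) : Nat.card G ≤ C.ncard * B.ncard := by
  have huniv : C * B = Set.univ := Set.eq_univ_of_forall fun g =>
    let ⟨c, hc, hcg⟩ := hcover g
    ⟨c, hc, c⁻¹ * g, hcg, mul_inv_cancel_left c g⟩
  calc Nat.card G = Nat.card (C * B : Set G) := by rw [huniv, Nat.card_univ]
    _ ≤ C.ncard * B.ncard := Set.natCard_mul_le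

theorem card_le_index_of_pairwise_inv_mul_notMem {H : Subgroup G} [H.FiniteIndex] {C : Finset G}
    (hC : (C : Set G).Pairwise fun a b => a⁻¹ * b ∉ H) : #C ≤ H.index := by
  have hinj : Function.Injective fun c : C => (c : G ⧸ H) := fun a b hab =>
    Subtype.ext (by_contra fun hne => hC a.2 b.2 hne (QuotientGroup.eq.mp hab))
  simpa [Subgroup.index] using Nat.card_le_card_of_injective _ hinj

end FiniteGroup

/-- A code of minimum Cayley distance at least `d`: the sets over which `maxCayleyCode n d`
maximizes. -/
def IsCayleyCode {n : ℕ} (d : ℕ) (C : Finset (Perm (Fin n))) : Prop :=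
  ∀ σ ∈ C, ∀ π ∈ C, σ ≠ π → d ≤ cayleyDist σ π

namespace IsCayleyCode

variable {n d : ℕ}

theorem bddAbove_card :
    BddAbove {M | ∃ C : Finset (Perm (Fin n)), #C = M ∧ IsCayleyCode d C} := by
  refine ⟨Fintype.card (Perm (Fin n)), ?_⟩
  rintro _ ⟨C, rfl, -⟩
  exact card_le_univ C

theorem card_le_maxCayleyCode {C : Finset (Perm (Fin n))} (hC : IsCayleyCode d C) :
    #C ≤ maxCayleyCode n d :=
  le_csSup bddAbove_card ⟨C, rfl, hC⟩

variable (n d) in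
theorem exists_card_eq_maxCayleyCode :
    ∃ C : Finset (Perm (Fin n)), #C = maxCayleyCode n d ∧ IsCayleyCode d C :=
  Nat.sSup_mem (s := {M | ∃ C : Finset (Perm (Fin n)), #C = M ∧ IsCayleyCode d C})
    ⟨0, ∅, by simp [IsCayleyCode]⟩ bddAbove_card

theorem insert {C : Finset (Perm (Fin n))} (hC : IsCayleyCode d C) {π : Perm (Fin n)}
    (hfar : ∀ σ ∈ C, d ≤ cayleyDist σ π) : IsCayleyCode d (insert π C) := by
  intro σ hσ ρ hρ hne
  rcases mem_insert.mp hσ with rfl | hσC <;> rcases mem_insert.mp hρ with rfl | hρC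
  · exact absurd rfl hne
  · exact cayleyDist_comm ρ σ ▸ hfar ρ hρC
  · exact hfar σ hσC
  · exact hC σ hσC ρ hρC hne

theorem exists_cayleyDist_lt {C : Finset (Perm (Fin n))} (hC : IsCayleyCode d C)
    (hmax : #C = maxCayleyCode n d) (hd : 0 < d) (π : Perm (Fin n)) :
    ∃ σ ∈ C, cayleyDist σ π < d := by
  by_contra! hfar
  have hπ : π ∉ C := fun hπ => hd.not_ge (cayleyDist_self π ▸ hfar π hπ)
  have hle := (hC.insert hfar).card_le_maxCayleyCode
  rw [card_insert_of_notMem hπ] at hle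
  omega

theorem card_mul_factorial_le {C : Finset (Perm (Fin n))} (hC : IsCayleyCode d C) (hd : 0 < d)
    (hdn : d ≤ n) : #C * d.factorial ≤ n.factorial := by
  let ι : Fin d ↪ Fin n := Fin.castLEEmb hdn
  let H : Subgroup (Perm (Fin n)) := (viaEmbeddingHom ι).range
  have hpair : (C : Set (Perm (Fin n))).Pairwise fun σ π => σ⁻¹ * π ∉ H := by
    rintro σ hσ π hπ hne ⟨ρ, hρ⟩
    rw [viaEmbeddingHom_apply, eq_inv_mul_iff_mul_eq] at hρ
    exact (hC σ hσ π hπ hne).not_gt (hρ ▸ cayleyDist_mul_viaEmbedding_lt hd ι σ ρ)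
  have hcard : Nat.card H = d.factorial := by
    have hrange := Nat.card_range_of_injective (viaEmbeddingHom_injective ι)
    rwa [Nat.card_perm, Nat.card_fin] at hrange
  calc #C * d.factorial
      ≤ H.index * Nat.card H := by
        rw [hcard]
        exact Nat.mul_le_mul_right _ (card_le_index_of_pairwise_inv_mul_notMem hpair)
    _ = n.factorial := by rw [H.index_mul_card, Nat.card_perm, Nat.card_fin]

end IsCayleyCode

theorem factorial_le_maxCayleyCode_mul_ncard {n d : ℕ} (hd : 0 < d) (hdn : d ≤ n) :
    n.factorial ≤
      maxCayleyCode n d * {π : Perm (Fin n) | n - d + 1 ≤ numCycles π}.ncard := by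
  obtain ⟨C, hcard, hC⟩ := IsCayleyCode.exists_card_eq_maxCayleyCode n d
  have hcover (π : Perm (Fin n)) :
      ∃ σ ∈ (C : Set (Perm (Fin n))), σ⁻¹ * π ∈ {ρ | n - d + 1 ≤ numCycles ρ} := by
    obtain ⟨σ, hσ, hlt⟩ := hC.exists_cayleyDist_lt hcard hd π
    exact ⟨σ, hσ, (cayleyDist_lt_iff hdn).mp hlt⟩
  have hle := card_le_ncard_mul_ncard_of_forall_exists_inv_mul_mem hcover
  rwa [Nat.card_perm, Nat.card_fin, Set.ncard_coe_finset, hcard] at hle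

theorem maxCayleyCode_mul_factorial_le {n d : ℕ} (hd : 0 < d) (hdn : d ≤ n) :
    maxCayleyCode n d * d.factorial ≤ n.factorial := by
  obtain ⟨C, hcard, hC⟩ := IsCayleyCode.exists_card_eq_maxCayleyCode n d
  exact hcard ▸ hC.card_mul_factorial_le hd hdn

/-- For all `n ≥ d ≥ 1`,
`n! / |{π : c(π) ≥ n−d+1}| ≤ A_T(n,d) ≤ n!/d!`. -/
theorem maxCayleyCode_bounds (n d : ℕ) (hd : 1 ≤ d) (hdn : d ≤ n) :
    (n.factorial : ℝ) / ({π : Equiv.Perm (Fin n) | n - d + 1 ≤ numCycles π}.ncard : ℝ)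
      ≤ (maxCayleyCode n d : ℝ) ∧
    (maxCayleyCode n d : ℝ) ≤ (n.factorial : ℝ) / (d.factorial : ℝ) := by
  constructor
  · refine div_le_of_le_mul₀ (by positivity) (by positivity) ?_
    exact_mod_cast factorial_le_maxCayleyCode_mul_ncard hd hdn
  · rw [le_div_iff₀ (by positivity)]
    exact_mod_cast maxCayleyCode_mul_factorial_le hd hdn
end
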